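/- Let A, V, B̌ : ℝ × ℝ³ → ℝ³ and φ : ℝ × ℝ³ → ℝ be smooth, and suppose there is a compact set K ⊆ ℝ³ such that A(t,·) and B̌(t,·) vanish outside K for every t. Assume for all (t,x): ∂ₜA = V×(∇×A) − ∇φ, ∂ₜB̌ = ∇×(V×B̌), and ∇·B̌ = 0. Then the cross helicity t ↦ ∫_{ℝ³} A(t,x)·B̌(t,x) dx is constant in t. -/

import Mathlib

open MeasureTheory

/-- `i`-th spatial partial derivative of a scalar field on ℝ³. -/
noncomputable def pd3 (i : Fin 3) (f : (Fin 3 → ℝ) → ℝ) (x : Fin 3 → ℝ) : ℝ :=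
  fderiv ℝ f x (Pi.single i 1)

/-- Gradient of a scalar field on ℝ³. -/
noncomputable def grad3 (f : (Fin 3 → ℝ) → ℝ) (x : Fin 3 → ℝ) : Fin 3 → ℝ :=
  fun i => pd3 i f x

/-- Divergence of a vector field on ℝ³. -/
noncomputable def div3 (F : (Fin 3 → ℝ) → (Fin 3 → ℝ)) (x : Fin 3 → ℝ) : ℝ :=
  ∑ i, pd3 i (fun y => F y i) x

/-- Curl of a vector field on ℝ³. -/
noncomputable def curl3 (F : (Fin 3 → ℝ) → (Fin 3 → ℝ)) (x : Fin 3 → ℝ) : Fin 3 → ℝ :=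
  ![pd3 1 (fun y => F y 2) x - pd3 2 (fun y => F y 1) x,
    pd3 2 (fun y => F y 0) x - pd3 0 (fun y => F y 2) x,
    pd3 0 (fun y => F y 1) x - pd3 1 (fun y => F y 0) x]

/-- Cross product on ℝ³. -/
def cross3 (a b : Fin 3 → ℝ) : Fin 3 → ℝ :=
  ![a 1 * b 2 - a 2 * b 1, a 2 * b 0 - a 0 * b 2, a 0 * b 1 - a 1 * b 0]

/-- Euclidean dot product on ℝ³. -/
def dot3 (a b : Fin 3 → ℝ) : ℝ := ∑ i, a i * b i

/-!
The cross-helicity density satisfies a local conservation law: with `E = V × B̌`,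
`∂ₜ(A·B̌) = (V × curl A - ∇φ)·B̌ + A·curl E = A·curl E - E·curl A - ∇φ·B̌ = div (E × A - φ B̌)`,
where the last step uses `div B̌ = 0`. Every term of the flux `E × A - φ B̌` contains `B̌`, so it is
supported in `K` and its divergence integrates to zero.
-/

section Integral

variable {X E : Type*} [NormedAddCommGroup E] [NormedSpace ℝ E]

section Fderiv

variable [NormedAddCommGroup X] [NormedSpace ℝ X] [MeasurableSpace X] {f : X → E}

theorem integrable_fderiv_apply_of_hasCompactSupport [OpensMeasurableSpace X] {μ : Measure X}
    [IsFiniteMeasureOnCompacts μ] (hf : ContDiff ℝ 1 f) (hc : HasCompactSupport f) (v : X) :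
    Integrable (fun x => fderiv ℝ f x v) μ :=
  ((hf.continuous_fderiv one_ne_zero).clm_apply continuous_const).integrable_of_hasCompactSupport
    (hc.fderiv_apply ℝ v)

theorem integral_fderiv_apply_eq_zero_of_hasCompactSupport [FiniteDimensional ℝ X] [BorelSpace X]
    {μ : Measure X} [μ.IsAddHaarMeasure] (hf : ContDiff ℝ 1 f) (hc : HasCompactSupport f) (v : X) :
    ∫ x, fderiv ℝ f x v ∂μ = 0 := by
  have hparts := integral_smul_fderiv_eq_neg_fderiv_smul_of_integrable (μ := μ) (v := v)
    (f := fun _ : X => (1 : ℝ)) (g := f) (by simp)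
    (by simpa only [one_smul] using integrable_fderiv_apply_of_hasCompactSupport hf hc v)
    (by simpa only [one_smul] using hf.continuous.integrable_of_hasCompactSupport hc)
    (fun _ _ => differentiableAt_const _) (fun x _ => hf.differentiable one_ne_zero x)
  simpa using hparts

end Fderiv

theorem hasDerivAt_integral_of_eq_zero_off_compact [TopologicalSpace X] [T2Space X]
    [MeasurableSpace X] [OpensMeasurableSpace X] {μ : Measure X} [IsFiniteMeasureOnCompacts μ]
    {f f' : ℝ → X → E} {K : Set X} (hK : IsCompact K) (hf : ∀ t, Continuous (f t))
    (hf' : Continuous fun p : ℝ × X => f' p.1 p.2)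
    (hderiv : ∀ t x, HasDerivAt (fun τ => f τ x) (f' t x) t)
    (hsupp : ∀ t x, x ∉ K → f t x = 0) (t : ℝ) :
    HasDerivAt (fun τ => ∫ x, f τ x ∂μ) (∫ x, f' t x ∂μ) t := by
  have hsupp' : ∀ τ x, x ∉ K → f' τ x = 0 := fun τ x hx =>
    (hderiv τ x).unique (by simpa only [hsupp _ x hx] using hasDerivAt_const τ (0 : E))
  have hf_int : ∀ τ, Integrable (f τ) μ := fun τ =>
    (hf τ).integrable_of_hasCompactSupport (.intro hK (hsupp τ))
  have hf'_int : Integrable (f' t) μ :=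
    (hf'.comp (.prodMk_right t)).integrable_of_hasCompactSupport (.intro hK (hsupp' t))
  obtain ⟨C, hC⟩ := ((isCompact_Icc (a := t - 1) (b := t + 1)).prod hK).exists_bound_of_continuousOn
    hf'.continuousOn
  have hbound : ∀ x, ∀ τ ∈ Set.Icc (t - 1) (t + 1), ‖f' τ x‖ ≤ K.indicator (fun _ => C) x := by
    intro x τ hτ
    by_cases hx : x ∈ K
    · simpa only [Set.indicator_of_mem hx] using hC (τ, x) ⟨hτ, hx⟩
    · simp only [hsupp' τ x hx, Set.indicator_of_notMem hx, norm_zero, le_refl]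
  have hbound_int : Integrable (K.indicator fun _ => C) μ :=
    (integrable_indicator_iff hK.measurableSet).2 (integrableOn_const hK.measure_lt_top.ne)
  exact (hasDerivAt_integral_of_dominated_loc_of_deriv_le
    (Icc_mem_nhds (sub_one_lt t) (lt_add_one t)) (.of_forall fun τ => (hf_int τ).1) (hf_int t)
    hf'_int.1 (.of_forall hbound) hbound_int (.of_forall fun x τ _ => hderiv τ x)).2

end Integral

section Dot3

theorem dot3_sub_left (a b c : Fin 3 → ℝ) : dot3 (a - b) c = dot3 a c - dot3 b c :=
  sub_dotProduct a b c

theorem dot3_comm (a b : Fin 3 → ℝ) : dot3 a b = dot3 b a :=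
  dotProduct_comm a b

theorem dot3_cross3_right_comm (a b c : Fin 3 → ℝ) :
    dot3 (cross3 a b) c = -dot3 (cross3 a c) b := by
  simp only [dot3, cross3, Fin.sum_univ_three, Matrix.cons_val]
  ring

theorem continuous_dot3 {X : Type*} [TopologicalSpace X] {a b : X → Fin 3 → ℝ}
    (ha : Continuous a) (hb : Continuous b) : Continuous fun x => dot3 (a x) (b x) :=
  ha.dotProduct hb

theorem hasDerivAt_dot3 {a b : ℝ → Fin 3 → ℝ} {a' b' : Fin 3 → ℝ} {t : ℝ}
    (ha : HasDerivAt a a' t) (hb : HasDerivAt b b' t) :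
    HasDerivAt (fun τ => dot3 (a τ) (b τ)) (dot3 a' (b t) + dot3 (a t) b') t := by
  simp only [dot3, ← Finset.sum_add_distrib]
  exact .fun_sum fun i _ => (hasDerivAt_pi.1 ha i).fun_mul (hasDerivAt_pi.1 hb i)

end Dot3

section Smoothness

variable {X : Type*} [NormedAddCommGroup X] [NormedSpace ℝ X] {F G : X → Fin 3 → ℝ}

theorem differentiableAt_cross3 {x : X} (hF : DifferentiableAt ℝ F x)
    (hG : DifferentiableAt ℝ G x) : DifferentiableAt ℝ (fun y => cross3 (F y) (G y)) x := by
  rw [differentiableAt_pi] at hF hG ⊢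
  intro i
  fin_cases i <;> exact ((hF _).mul (hG _)).sub ((hF _).mul (hG _))

theorem contDiff_cross3 {n : WithTop ℕ∞} (hF : ContDiff ℝ n F) (hG : ContDiff ℝ n G) :
    ContDiff ℝ n fun y => cross3 (F y) (G y) := by
  rw [contDiff_pi] at hF hG ⊢
  intro i
  fin_cases i <;> exact ((hF _).mul (hG _)).sub ((hF _).mul (hG _))

end Smoothness

section Div3

variable {f g : (Fin 3 → ℝ) → ℝ} {F G : (Fin 3 → ℝ) → Fin 3 → ℝ} {x : Fin 3 → ℝ}

theorem pd3_sub (i : Fin 3) (hf : DifferentiableAt ℝ f x) (hg : DifferentiableAt ℝ g x) :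
    pd3 i (fun y => f y - g y) x = pd3 i f x - pd3 i g x := by
  simp only [pd3, fderiv_fun_sub hf hg, sub_apply]

theorem pd3_mul (i : Fin 3) (hf : DifferentiableAt ℝ f x) (hg : DifferentiableAt ℝ g x) :
    pd3 i (fun y => f y * g y) x = f x * pd3 i g x + g x * pd3 i f x := by
  simp only [pd3, fderiv_fun_mul hf hg, add_apply, smul_apply, smul_eq_mul]

theorem div3_sub (hF : DifferentiableAt ℝ F x) (hG : DifferentiableAt ℝ G x) :
    div3 (fun y => F y - G y) x = div3 F x - div3 G x := by
  rw [differentiableAt_pi] at hF hG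
  simp only [div3, Pi.sub_apply, pd3_sub _ (hF _) (hG _), Finset.sum_sub_distrib]

theorem div3_smul (hf : DifferentiableAt ℝ f x) (hF : DifferentiableAt ℝ F x) :
    div3 (fun y => f y • F y) x = f x * div3 F x + dot3 (grad3 f x) (F x) := by
  rw [differentiableAt_pi] at hF
  simp only [div3, dot3, grad3, Pi.smul_apply, smul_eq_mul, pd3_mul _ hf (hF _),
    Finset.sum_add_distrib, Finset.mul_sum, mul_comm (F x _)]

theorem div3_cross3 (hF : DifferentiableAt ℝ F x) (hG : DifferentiableAt ℝ G x) :
    div3 (fun y => cross3 (F y) (G y)) x = dot3 (curl3 F x) (G x) - dot3 (F x) (curl3 G x) := by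
  rw [differentiableAt_pi] at hF hG
  have hFG : ∀ i j, DifferentiableAt ℝ (fun y => F y i * G y j) x := fun i j => (hF i).mul (hG j)
  simp only [div3, dot3, curl3, cross3, Fin.sum_univ_three, Matrix.cons_val,
    pd3_sub _ (hFG _ _) (hFG _ _), pd3_mul _ (hF _) (hG _)]
  ring

theorem integral_div3_eq_zero_of_hasCompactSupport (hF : ContDiff ℝ 1 F)
    (hc : HasCompactSupport F) : ∫ x, div3 F x = 0 := by
  have hF_comp : ∀ i, ContDiff ℝ 1 fun y => F y i := contDiff_pi.1 hF
  have hc_comp : ∀ i, HasCompactSupport fun y => F y i := fun i =>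
    hc.comp_left (g := fun a : Fin 3 → ℝ => a i) rfl
  simp only [div3, pd3]
  rw [integral_finsetSum _ fun i _ =>
    integrable_fderiv_apply_of_hasCompactSupport (hF_comp i) (hc_comp i) _]
  exact Finset.sum_eq_zero fun i _ =>
    integral_fderiv_apply_eq_zero_of_hasCompactSupport (hF_comp i) (hc_comp i) _

end Div3

section CrossHelicityFlux

/-- The flux `(V × B) × A - φ B` of the cross-helicity density `A·B` in its local conservation
law; the sign is such that `∂ₜ(A·B)` is plus the divergence of the flux. -/
def crossHelicityFlux (A V B : (Fin 3 → ℝ) → Fin 3 → ℝ) (φ : (Fin 3 → ℝ) → ℝ) (x : Fin 3 → ℝ) :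
    Fin 3 → ℝ :=
  cross3 (cross3 (V x) (B x)) (A x) - φ x • B x

variable {A V B : (Fin 3 → ℝ) → Fin 3 → ℝ} {φ : (Fin 3 → ℝ) → ℝ} {x : Fin 3 → ℝ}

theorem div3_crossHelicityFlux (hA : DifferentiableAt ℝ A x) (hV : DifferentiableAt ℝ V x)
    (hB : DifferentiableAt ℝ B x) (hφ : DifferentiableAt ℝ φ x) (hdiv : div3 B x = 0) :
    div3 (crossHelicityFlux A V B φ) x =
      dot3 (cross3 (V x) (curl3 A x) - grad3 φ x) (B x)
        + dot3 (A x) (curl3 (fun y => cross3 (V y) (B y)) x) := by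
  have hE : DifferentiableAt ℝ (fun y => cross3 (V y) (B y)) x := differentiableAt_cross3 hV hB
  calc div3 (crossHelicityFlux A V B φ) x
      = div3 (fun y => cross3 (cross3 (V y) (B y)) (A y)) x - div3 (fun y => φ y • B y) x :=
        div3_sub (differentiableAt_cross3 hE hA) (hφ.smul hB)
    _ = dot3 (curl3 (fun y => cross3 (V y) (B y)) x) (A x)
          - dot3 (cross3 (V x) (B x)) (curl3 A x) - dot3 (grad3 φ x) (B x) := by
        rw [div3_cross3 hE hA, div3_smul hφ hB, hdiv, mul_zero, zero_add]
    _ = dot3 (cross3 (V x) (curl3 A x) - grad3 φ x) (B x)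
          + dot3 (A x) (curl3 (fun y => cross3 (V y) (B y)) x) := by
        rw [dot3_sub_left, dot3_cross3_right_comm (V x) (curl3 A x), dot3_comm (A x)]
        ring

theorem contDiff_crossHelicityFlux {n : WithTop ℕ∞} (hA : ContDiff ℝ n A) (hV : ContDiff ℝ n V)
    (hB : ContDiff ℝ n B) (hφ : ContDiff ℝ n φ) : ContDiff ℝ n (crossHelicityFlux A V B φ) :=
  (contDiff_cross3 (contDiff_cross3 hV hB) hA).sub (hφ.smul hB)

theorem crossHelicityFlux_eq_zero (hB : B x = 0) : crossHelicityFlux A V B φ x = 0 := by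
  ext i
  fin_cases i <;> simp [crossHelicityFlux, cross3, hB]

theorem integral_div3_crossHelicityFlux_eq_zero (hA : ContDiff ℝ 1 A) (hV : ContDiff ℝ 1 V)
    (hB : ContDiff ℝ 1 B) (hφ : ContDiff ℝ 1 φ) (hc : HasCompactSupport B) :
    ∫ x, div3 (crossHelicityFlux A V B φ) x = 0 :=
  integral_div3_eq_zero_of_hasCompactSupport (contDiff_crossHelicityFlux hA hV hB hφ)
    (hc.mono' (Function.support_subset_iff'.2 fun _ hx =>
      crossHelicityFlux_eq_zero (image_eq_zero_of_notMem_tsupport hx)))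

end CrossHelicityFlux

section TimeDependent

variable {X E : Type*} [NormedAddCommGroup X] [NormedSpace ℝ X] [NormedAddCommGroup E]
  [NormedSpace ℝ E] {f : ℝ → X → E}

theorem contDiff_spatial_slice {n : WithTop ℕ∞} (hf : ContDiff ℝ n fun p : ℝ × X => f p.1 p.2)
    (t : ℝ) : ContDiff ℝ n (f t) :=
  hf.comp (contDiff_prodMk_right t)

theorem hasDerivAt_deriv_time (hf : ContDiff ℝ 1 fun p : ℝ × X => f p.1 p.2) (t : ℝ) (x : X) :
    HasDerivAt (fun τ => f τ x) (deriv (fun τ => f τ x) t) t :=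
  ((hf.comp (contDiff_prodMk_left x)).differentiable one_ne_zero t).hasDerivAt

theorem continuous_deriv_time (hf : ContDiff ℝ 1 fun p : ℝ × X => f p.1 p.2) :
    Continuous fun p : ℝ × X => deriv (fun τ => f τ p.2) p.1 := by
  have hderiv : ∀ p : ℝ × X, deriv (fun τ => f τ p.2) p.1 =
      fderiv ℝ (fun q : ℝ × X => f q.1 q.2) p (1, 0) := by
    intro p
    have hline : HasDerivAt (fun τ => (τ, p.2)) ((1 : ℝ), (0 : X)) p.1 :=
      (hasDerivAt_id p.1).prodMk (hasDerivAt_const p.1 p.2)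
    exact ((hf.differentiable one_ne_zero p).hasFDerivAt.comp_hasDerivAt p.1 hline).deriv
  simpa only [hderiv] using (hf.continuous_fderiv one_ne_zero).clm_apply continuous_const

theorem hasDerivAt_integral_dot3 {A B : ℝ → (Fin 3 → ℝ) → Fin 3 → ℝ}
    (hA : ContDiff ℝ 1 fun p : ℝ × (Fin 3 → ℝ) => A p.1 p.2)
    (hB : ContDiff ℝ 1 fun p : ℝ × (Fin 3 → ℝ) => B p.1 p.2)
    {K : Set (Fin 3 → ℝ)} (hK : IsCompact K) (hBsupp : ∀ t x, x ∉ K → B t x = 0) (t : ℝ) :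
    HasDerivAt (fun τ => ∫ x, dot3 (A τ x) (B τ x))
      (∫ x, (dot3 (deriv (fun τ => A τ x) t) (B t x)
        + dot3 (A t x) (deriv (fun τ => B τ x) t))) t :=
  hasDerivAt_integral_of_eq_zero_off_compact hK
    (fun τ => continuous_dot3 (contDiff_spatial_slice hA τ).continuous
      (contDiff_spatial_slice hB τ).continuous)
    ((continuous_dot3 (continuous_deriv_time hA) hB.continuous).add
      (continuous_dot3 hA.continuous (continuous_deriv_time hB)))
    (fun τ x => hasDerivAt_dot3 (hasDerivAt_deriv_time hA τ x) (hasDerivAt_deriv_time hB τ x))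
    (fun τ x hx => by simp [dot3, hBsupp τ x hx]) t

end TimeDependent

theorem mock_cross_helicity_constant_general
    (A V Bm : ℝ → (Fin 3 → ℝ) → (Fin 3 → ℝ))
    (φ : ℝ → (Fin 3 → ℝ) → ℝ)
    (hA : ContDiff ℝ 1 (fun p : ℝ × (Fin 3 → ℝ) => A p.1 p.2))
    (hV : ∀ t, ContDiff ℝ 1 (V t))
    (hBm : ContDiff ℝ 1 (fun p : ℝ × (Fin 3 → ℝ) => Bm p.1 p.2))
    (hφ : ∀ t, ContDiff ℝ 1 (φ t))
    (K : Set (Fin 3 → ℝ)) (hK : IsCompact K)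
    (hBmsupp : ∀ t x, x ∉ K → Bm t x = 0)
    (hindA : ∀ t x, deriv (fun τ => A τ x) t =
      cross3 (V t x) (curl3 (A t) x) - grad3 (φ t) x)
    (hindBm : ∀ t x, deriv (fun τ => Bm τ x) t =
      curl3 (fun y => cross3 (V t y) (Bm t y)) x)
    (hdivBm : ∀ t x, div3 (Bm t) x = 0) (t₁ t₂ : ℝ) :
    (∫ x : Fin 3 → ℝ, dot3 (A t₁ x) (Bm t₁ x)) =
      ∫ x : Fin 3 → ℝ, dot3 (A t₂ x) (Bm t₂ x) := by
  have hA_slice : ∀ t, ContDiff ℝ 1 (A t) := contDiff_spatial_slice hA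
  have hBm_slice : ∀ t, ContDiff ℝ 1 (Bm t) := contDiff_spatial_slice hBm
  have conservation : ∀ t x, dot3 (deriv (fun τ => A τ x) t) (Bm t x)
      + dot3 (A t x) (deriv (fun τ => Bm τ x) t) =
        div3 (crossHelicityFlux (A t) (V t) (Bm t) (φ t)) x := by
    intro t x
    rw [hindA, hindBm, div3_crossHelicityFlux ((hA_slice t).differentiable one_ne_zero x)
      ((hV t).differentiable one_ne_zero x) ((hBm_slice t).differentiable one_ne_zero x)
      ((hφ t).differentiable one_ne_zero x) (hdivBm t x)]
  have hderiv : ∀ t, HasDerivAt (fun τ => ∫ x, dot3 (A τ x) (Bm τ x)) 0 t := by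
    intro t
    have hflux := integral_div3_crossHelicityFlux_eq_zero (hA_slice t) (hV t) (hBm_slice t) (hφ t)
      (.intro hK (hBmsupp t))
    simpa only [conservation, hflux] using hasDerivAt_integral_dot3 hA hBm hK hBmsupp t
  exact is_const_of_deriv_eq_zero (fun t => (hderiv t).differentiableAt)
    (fun t => (hderiv t).deriv) t₁ t₂

/-- Conservation of the cross helicity `∫ A·B̌` coupling the vector potential
`A` (with `∂ₜA = V×(∇×A) − ∇φ`) and a divergence-free mock field `B̌` Lie-dragged by the
same flow (`∂ₜB̌ = ∇×(V×B̌)`). -/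
theorem mock_cross_helicity_constant
    (A V Bm : ℝ → (Fin 3 → ℝ) → (Fin 3 → ℝ))
    (φ : ℝ → (Fin 3 → ℝ) → ℝ)
    (hA : ContDiff ℝ (⊤ : ℕ∞) (fun p : ℝ × (Fin 3 → ℝ) => A p.1 p.2))
    (hV : ContDiff ℝ (⊤ : ℕ∞) (fun p : ℝ × (Fin 3 → ℝ) => V p.1 p.2))
    (hBm : ContDiff ℝ (⊤ : ℕ∞) (fun p : ℝ × (Fin 3 → ℝ) => Bm p.1 p.2))
    (hφ : ContDiff ℝ (⊤ : ℕ∞) (fun p : ℝ × (Fin 3 → ℝ) => φ p.1 p.2))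
    (K : Set (Fin 3 → ℝ)) (hK : IsCompact K)
    (hAsupp : ∀ t x, x ∉ K → A t x = 0)
    (hBmsupp : ∀ t x, x ∉ K → Bm t x = 0)
    (hindA : ∀ t x, deriv (fun τ => A τ x) t =
      cross3 (V t x) (curl3 (A t) x) - grad3 (φ t) x)
    (hindBm : ∀ t x, deriv (fun τ => Bm τ x) t =
      curl3 (fun y => cross3 (V t y) (Bm t y)) x)
    (hdivBm : ∀ t x, div3 (Bm t) x = 0) :
    ∀ t₁ t₂ : ℝ,
      (∫ x : Fin 3 → ℝ, dot3 (A t₁ x) (Bm t₁ x)) =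
        ∫ x : Fin 3 → ℝ, dot3 (A t₂ x) (Bm t₂ x) := by
  have one_le_top : (1 : WithTop ℕ∞) ≤ (⊤ : ℕ∞) := by exact_mod_cast le_top
  exact mock_cross_helicity_constant_general A V Bm φ (hA.of_le one_le_top)
    (contDiff_spatial_slice (hV.of_le one_le_top)) (hBm.of_le one_le_top)
    (contDiff_spatial_slice (hφ.of_le one_le_top))
    K hK hBmsupp hindA hindBm hdivBm
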